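/- arXiv:1710.04633 — 2 statements merged into one kernel-verified Lean document; each statement's English description precedes it below -/
import Mathlib

section
/- Let $1 \le k < r$ and let $\mathcal{H}$ be an $r$-uniform $k$-intersecting hypergraph on the vertex set $[n]$. Then the number of edges of $\mathcal{H}$ is at most $\max_{0 \le i \le (n-k)/2} |\mathcal{B}_i|$, where for each nonnegative integer $i$ with $0 \le i \le (n-k)/2$, $\mathcal{B}_i$ is the family of all $r$-element subsets $E$ of $[n]$ such that $|E \cap [k+2i]| \ge k+i$. -/
namespace CompleteIntersection

open Finset

/-- The family `F` consists of `k`-sets, any two of which meet in at least `t` elements. -/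
def IsIntersectingFamily {n : ℕ} (k t : ℕ) (F : Finset (Finset (Fin n))) : Prop :=
  (∀ A ∈ F, #A = k) ∧ ∀ A ∈ F, ∀ B ∈ F, t ≤ #(A ∩ B)

/-- A `t`-intersecting family of `k`-sets of the largest possible size. -/
def IsMaxIntersectingFamily {n : ℕ} (k t : ℕ) (F : Finset (Finset (Fin n))) : Prop :=
  IsIntersectingFamily k t F ∧
    ∀ G : Finset (Finset (Fin n)), IsIntersectingFamily k t G → #G ≤ #F

/-- Replace the element `x` of `A` by `y`. -/
def exchange {n : ℕ} (x y : Fin n) (A : Finset (Fin n)) : Finset (Fin n) :=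
  insert y (A.erase x)

/-- The family is closed under replacing an element by a smaller one. -/
def IsShifted {n : ℕ} (F : Finset (Finset (Fin n))) : Prop :=
  ∀ A ∈ F, ∀ x y : Fin n, y < x → x ∈ A → y ∉ A → exchange x y A ∈ F

/-- The family is closed under exchanging elements of `S`. -/
def IsExchangeable {n : ℕ} (S : Set (Fin n)) (F : Finset (Finset (Fin n))) : Prop :=
  ∀ A ∈ F, ∀ x ∈ S, ∀ y ∈ S, x ∈ A → y ∉ A → exchange x y A ∈ F

/-- The first `m` elements of `Fin n`. -/
def initSeg (n m : ℕ) : Finset (Fin n) := univ.filter fun v => (v : ℕ) < m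

/-- The members of `F` containing `p` in which `p` cannot be replaced by a larger element. -/
def pushBoundary {n : ℕ} (p : Fin n) (F : Finset (Finset (Fin n))) : Finset (Finset (Fin n)) :=
  F.filter fun A => p ∈ A ∧ ∃ z, p < z ∧ z ∉ A ∧ exchange p z A ∉ F

/-- All sets obtained from members of `𝒜` by replacing `p` by a larger element. -/
def push {n : ℕ} (p : Fin n) (𝒜 : Finset (Finset (Fin n))) : Finset (Finset (Fin n)) :=
  𝒜.biUnion fun A => (univ.filter fun z => p < z ∧ z ∉ A).image fun z => exchange p z A

section

variable {n k t m : ℕ} {F : Finset (Finset (Fin n))}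

@[simp]
theorem mem_initSeg {v : Fin n} : v ∈ initSeg n m ↔ (v : ℕ) < m := by
  simp [initSeg]

theorem card_initSeg (h : m ≤ n) : #(initSeg n m) = m := by
  rw [initSeg, Fin.card_filter_val_lt, min_eq_right h]

theorem mem_exchange {x y v : Fin n} {A : Finset (Fin n)} :
    v ∈ exchange x y A ↔ v = y ∨ (v ≠ x ∧ v ∈ A) := by
  simp [exchange]

theorem card_exchange {x y : Fin n} {A : Finset (Fin n)} (hx : x ∈ A) (hy : y ∉ A) :
    #(exchange x y A) = #A := by
  rw [exchange, card_insert_of_notMem (by simp [hy]), card_erase_add_one hx]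

theorem mem_push {p : Fin n} {P : Finset (Fin n)} {𝒜 : Finset (Finset (Fin n))} :
    P ∈ push p 𝒜 ↔ ∃ A ∈ 𝒜, ∃ z, (p < z ∧ z ∉ A) ∧ exchange p z A = P := by
  simp [push]

/-- In a shifted family any two members already meet in `t` elements of an initial segment
outside of which the family is symmetric. -/
theorem le_card_inter_initSeg (hF : IsIntersectingFamily k t F) (hs : IsShifted F)
    (hm : IsExchangeable {v | m ≤ (v : ℕ)} F) (hn : 2 * k < n + t)
    {A B : Finset (Fin n)} (hA : A ∈ F) (hB : B ∈ F) : t ≤ #(A ∩ B ∩ initSeg n m) := by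
  induction h : #((A ∩ B) \ initSeg n m) generalizing A with
  | zero =>
    have h1 := card_inter_add_card_sdiff (A ∩ B) (initSeg n m)
    have h2 := hF.2 A hA B hB
    omega
  | succ d ih =>
    obtain ⟨c, hc⟩ : ((A ∩ B) \ initSeg n m).Nonempty := by
      rw [← card_pos]; omega
    obtain ⟨j, hj⟩ : ∃ j, j ∉ A ∪ B := by
      by_contra! hcon
      have h1 := card_union_add_card_inter A B
      rw [eq_univ_of_forall hcon, card_univ, Fintype.card_fin, hF.1 A hA, hF.1 B hB] at h1
      have h2 := hF.2 A hA B hB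
      omega
    simp only [mem_sdiff, mem_inter, mem_initSeg, not_lt, mem_union, not_or] at hc hj
    have hA' : exchange c j A ∈ F := by
      by_cases hjm : (j : ℕ) < m
      · exact hs A hA c j (Fin.lt_def.2 (by omega)) hc.1.1 hj.1
      · exact hm A hA c hc.2 j (by simpa using hjm) hc.1.1 hj.1
    have h1 : (exchange c j A ∩ B) \ initSeg n m = ((A ∩ B) \ initSeg n m).erase c := by
      ext v
      simp only [mem_sdiff, mem_inter, mem_exchange, mem_erase]
      grind
    have h2 : exchange c j A ∩ B ∩ initSeg n m = A ∩ B ∩ initSeg n m := by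
      ext v
      have := hc.2
      simp only [mem_inter, mem_exchange, mem_initSeg]
      grind
    rw [← h2]
    apply ih hA'
    rw [h1, card_erase_of_mem (by simpa using hc), h]
    rfl

theorem initSeg_subset_union (hF : IsIntersectingFamily k t F) (hs : IsShifted F) {p : Fin n}
    (hm : IsExchangeable {v | (p : ℕ) + 1 ≤ v} F) (hn : 2 * k < n + t)
    {A B : Finset (Fin n)} (hA : A ∈ F) (hB : B ∈ F) (hpA : p ∈ A) (hpB : p ∈ B)
    (h : #(A ∩ B ∩ initSeg n (p + 1)) ≤ t) : initSeg n (p + 1) ⊆ A ∪ B := by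
  intro j hj
  by_contra hcon
  simp only [mem_union, not_or] at hcon
  have hjp : j < p := by
    have : j ≠ p := by grind
    simp only [mem_initSeg] at hj
    omega
  have h1 := le_card_inter_initSeg hF hs hm hn (hs A hA p j hjp hpA hcon.1) hB
  have h2 : exchange p j A ∩ B ∩ initSeg n (p + 1) = (A ∩ B ∩ initSeg n (p + 1)).erase p := by
    ext v
    simp only [mem_inter, mem_exchange, mem_erase]
    grind
  rw [h2, card_erase_of_mem (by simp [hpA, hpB])] at h1
  have : 0 < #(A ∩ B ∩ initSeg n (p + 1)) := card_pos.2 ⟨p, by simp [hpA, hpB]⟩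
  omega

theorem mem_pushBoundary_of_card_inter_le (hF : IsIntersectingFamily k t F) (hs : IsShifted F)
    {p : Fin n} (hm : IsExchangeable {v | (p : ℕ) + 1 ≤ v} F) (hn : 2 * k < n + t)
    {A B : Finset (Fin n)} (hA : A ∈ F) (hB : B ∈ F) (hpA : p ∈ A) (hpB : p ∈ B)
    (h : #(A ∩ B ∩ initSeg n (p + 1)) ≤ t) : B ∈ pushBoundary p F := by
  have hsub := initSeg_subset_union hF hs hm hn hA hB hpA hpB h
  obtain ⟨z, hz, hzB⟩ : ∃ z, p < z ∧ z ∉ B := by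
    by_contra! hcon
    have hu : A ∪ B = univ := by
      refine eq_univ_of_forall fun v => ?_
      by_cases hv : p < v
      · exact mem_union_right _ (hcon v hv)
      · exact hsub (by simp only [mem_initSeg]; omega)
    have h1 := card_union_add_card_inter A B
    rw [hu, card_univ, Fintype.card_fin, hF.1 A hA, hF.1 B hB] at h1
    have h2 := hF.2 A hA B hB
    omega
  refine mem_filter.2 ⟨hB, hpB, z, hz, hzB, fun hmem => ?_⟩
  have h1 := le_card_inter_initSeg hF hs hm hn hA hmem
  have h2 : A ∩ exchange p z B ∩ initSeg n (p + 1) = (A ∩ B ∩ initSeg n (p + 1)).erase p := by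
    ext v
    simp only [mem_inter, mem_exchange, mem_erase, mem_initSeg]
    have : v = z → ¬ (v : ℕ) < p + 1 := by rintro rfl; omega
    grind
  rw [h2, card_erase_of_mem (by simp [hpA, hpB])] at h1
  have : 0 < #(A ∩ B ∩ initSeg n (p + 1)) := card_pos.2 ⟨p, by simp [hpA, hpB]⟩
  omega

theorem exchange_notMem_of_mem_pushBoundary {p : Fin n}
    (hm : IsExchangeable {v | (p : ℕ) + 1 ≤ v} F) {A : Finset (Fin n)}
    (hA : A ∈ pushBoundary p F) {z : Fin n} (hz : p < z) (hzA : z ∉ A) :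
    exchange p z A ∉ F := by
  obtain ⟨-, hpA, w, hw, hwA, hwF⟩ := mem_filter.1 hA
  intro hmem
  by_cases hzw : w = z
  · exact hwF (hzw ▸ hmem)
  have h := hm _ hmem z (Nat.succ_le_of_lt hz) w (Nat.succ_le_of_lt hw)
    (by simp [mem_exchange]) (by simp [mem_exchange, hzw, hwA])
  refine hwF ?_
  convert h using 1
  ext v
  simp only [mem_exchange]
  grind

theorem card_push_le (hF : IsMaxIntersectingFamily k t F) (hs : IsShifted F) {p : Fin n}
    (hm : IsExchangeable {v | (p : ℕ) + 1 ≤ v} F) (hn : 2 * k < n + t)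
    {𝒜 ℬ : Finset (Finset (Fin n))} (h𝒜 : 𝒜 ⊆ pushBoundary p F) (hℬ : ℬ ⊆ F)
    (h₁ : ∀ A ∈ 𝒜, ∀ B ∈ F, p ∈ B → #(A ∩ B ∩ initSeg n (p + 1)) ≤ t → B ∈ ℬ)
    (h₂ : ∀ A ∈ 𝒜, ∀ B ∈ 𝒜, t + 1 ≤ #(A ∩ B ∩ initSeg n (p + 1))) :
    #(push p 𝒜) ≤ #ℬ := by
  have hmix : ∀ P ∈ push p 𝒜, ∀ B ∈ F \ ℬ, t ≤ #(P ∩ B) := by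
    intro P hP B hB
    obtain ⟨A, hA, z, ⟨hz, hzA⟩, rfl⟩ := mem_push.1 hP
    obtain ⟨hBF, hBℬ⟩ := mem_sdiff.1 hB
    have hAF := (mem_filter.1 (h𝒜 hA)).1
    have h := le_card_inter_initSeg hF.1 hs hm hn hAF hBF
    by_cases hpB : p ∈ B
    · have h3 : t + 1 ≤ #(A ∩ B ∩ initSeg n (p + 1)) := by
        by_contra hcon
        exact hBℬ (h₁ A hA B hBF hpB (by omega))
      have h4 : (A ∩ B ∩ initSeg n (p + 1)).erase p ⊆ exchange p z A ∩ B := by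
        intro v
        simp only [mem_inter, mem_exchange, mem_erase]
        grind
      have h5 := card_le_card h4
      have h6 := pred_card_le_card_erase (s := A ∩ B ∩ initSeg n (p + 1)) (a := p)
      omega
    · refine h.trans (card_le_card fun v => ?_)
      simp only [mem_inter, mem_exchange]
      grind
  have hint : IsIntersectingFamily k t (F \ ℬ ∪ push p 𝒜) := by
    refine ⟨fun P hP => ?_, fun P hP Q hQ => ?_⟩
    · rcases mem_union.1 hP with hP | hP
      · exact hF.1.1 P (mem_sdiff.1 hP).1
      · obtain ⟨A, hA, z, ⟨hz, hzA⟩, rfl⟩ := mem_push.1 hP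
        have hA' := mem_filter.1 (h𝒜 hA)
        rw [card_exchange hA'.2.1 hzA, hF.1.1 A hA'.1]
    · rcases mem_union.1 hP with hP | hP <;> rcases mem_union.1 hQ with hQ | hQ
      · exact hF.1.2 P (mem_sdiff.1 hP).1 Q (mem_sdiff.1 hQ).1
      · rw [inter_comm]
        exact hmix Q hQ P hP
      · exact hmix P hP Q hQ
      · obtain ⟨A, hA, z, ⟨hz, hzA⟩, rfl⟩ := mem_push.1 hP
        obtain ⟨B, hB, w, ⟨hw, hwB⟩, rfl⟩ := mem_push.1 hQ
        have h4 : (A ∩ B ∩ initSeg n (p + 1)).erase p ⊆ exchange p z A ∩ exchange p w B := by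
          intro v
          simp only [mem_inter, mem_exchange, mem_erase]
          grind
        have h5 := card_le_card h4
        have h6 := pred_card_le_card_erase (s := A ∩ B ∩ initSeg n (p + 1)) (a := p)
        have h7 := h₂ A hA B hB
        omega
  have hdisj : Disjoint (F \ ℬ) (push p 𝒜) := by
    refine disjoint_left.2 fun P hP hP' => ?_
    obtain ⟨A, hA, z, ⟨hz, hzA⟩, rfl⟩ := mem_push.1 hP'
    exact exchange_notMem_of_mem_pushBoundary hm (h𝒜 hA) hz hzA (mem_sdiff.1 hP).1
  have h := hF.2 _ hint
  rw [card_union_of_disjoint hdisj, card_sdiff_of_subset hℬ] at h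
  have := card_le_card hℬ
  omega

theorem mul_card_le_mul_card_push {p : Fin n} {𝒜 : Finset (Finset (Fin n))} {a c : ℕ}
    (hp : ∀ A ∈ 𝒜, p ∈ A) (ha : ∀ A ∈ 𝒜, #(A \ initSeg n (p + 1)) = a)
    (hc : ∀ A ∈ 𝒜, #(univ.filter fun z => p < z ∧ z ∉ A) = c) :
    c * #𝒜 ≤ (a + 1) * #(push p 𝒜) := by
  rw [mul_comm, mul_comm (a + 1)]
  refine card_mul_le_card_mul (fun A P => ∃ z, (p < z ∧ z ∉ A) ∧ exchange p z A = P) ?_ ?_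
  · intro A hA
    rw [← hc A hA, ← card_image_of_injOn (f := fun z => exchange p z A)]
    · refine card_le_card fun P hP => ?_
      simp only [mem_image, mem_filter, mem_univ, true_and] at hP
      exact mem_filter.2 ⟨mem_push.2 ⟨A, hA, hP⟩, hP⟩
    · intro z hz w hw h
      simp only [coe_filter, mem_univ, true_and, Set.mem_ofPred_eq] at hz hw
      have hz' : z ∈ exchange p w A := by
        rw [← show exchange p z A = exchange p w A from h]; simp [mem_exchange]
      simp only [mem_exchange] at hz'
      grind
  · intro P hP
    obtain ⟨A, hA, z, ⟨hz, hzA⟩, rfl⟩ := mem_push.1 hP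
    have hcard : #(exchange p z A \ initSeg n (p + 1)) = a + 1 := by
      have : exchange p z A \ initSeg n (p + 1) = insert z (A \ initSeg n (p + 1)) := by
        ext v
        simp only [mem_sdiff, mem_exchange, mem_initSeg, mem_insert]
        have : v = z → ¬ (v : ℕ) < p + 1 := by rintro rfl; omega
        have : v = p → (v : ℕ) < p + 1 := by rintro rfl; omega
        grind
      rw [this, card_insert_of_notMem (by simp [hzA]), ha A hA]
    rw [← hcard]
    refine (card_le_card (t := (exchange p z A \ initSeg n (p + 1)).image
      fun w => exchange w p (exchange p z A)) fun B hB => ?_).trans card_image_le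
    obtain ⟨hB, w, ⟨hw, hwB⟩, h⟩ := mem_filter.1 hB
    refine mem_image.2 ⟨w, ?_, ?_⟩
    · rw [← h]
      simp only [mem_sdiff, mem_exchange, mem_initSeg, true_or, true_and]
      omega
    · rw [← h]
      have := hp B hB
      ext v
      simp only [mem_exchange]
      grind

/-- The members of the boundary with prescribed size on the initial segment up to `p`. -/
def pushLayer {n : ℕ} (p : Fin n) (i : ℕ) (F : Finset (Finset (Fin n))) :
    Finset (Finset (Fin n)) :=
  (pushBoundary p F).filter fun A => #(A ∩ initSeg n (p + 1)) = i

theorem mem_of_mem_pushBoundary {p : Fin n} {A : Finset (Fin n)} (hA : A ∈ pushBoundary p F) :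
    A ∈ F ∧ p ∈ A :=
  have h := mem_filter.1 hA
  ⟨h.1, h.2.1⟩

theorem card_inter_initSeg_of_subset_union {M : ℕ} (hM : M ≤ n) {A B : Finset (Fin n)}
    (h : initSeg n M ⊆ A ∪ B) :
    #(A ∩ initSeg n M) + #(B ∩ initSeg n M) = M + #(A ∩ B ∩ initSeg n M) := by
  have h1 := card_union_add_card_inter (A ∩ initSeg n M) (B ∩ initSeg n M)
  rw [← union_inter_distrib_right, inter_eq_right.2 h, card_initSeg hM,
    ← inter_inter_distrib_right] at h1
  omega

theorem card_sdiff_initSeg_of_mem_pushLayer (hF : IsIntersectingFamily k t F) {p : Fin n} {i : ℕ}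
    {A : Finset (Fin n)} (hA : A ∈ pushLayer p i F) :
    #(A \ initSeg n (p + 1)) + i = k ∧
      #(univ.filter fun z => p < z ∧ z ∉ A) + #(A \ initSeg n (p + 1)) + (p + 1) = n ∧
      0 < #(univ.filter fun z => p < z ∧ z ∉ A) := by
  obtain ⟨hA', rfl⟩ := mem_filter.1 hA
  obtain ⟨hAF, hpA, z, hz, hzA, -⟩ := mem_filter.1 hA'
  refine ⟨?_, ?_, card_pos.2 ⟨z, by simp [hz, hzA]⟩⟩
  · rw [← hF.1 A hAF, add_comm, card_inter_add_card_sdiff]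
  · have h : (univ.filter fun z => p < z ∧ z ∉ A) = (A ∪ initSeg n (p + 1))ᶜ := by
      ext v
      simp only [mem_filter, mem_univ, true_and, mem_compl, mem_union, mem_initSeg, not_or]
      rw [and_comm, Fin.lt_def, Nat.lt_succ_iff, not_le]
    have h1 := card_compl_add_card (A ∪ initSeg n (p + 1))
    have h2 := card_sdiff_add_card A (initSeg n (p + 1))
    rw [card_initSeg p.2] at h2
    rw [Fintype.card_fin] at h1
    rw [h]
    omega

/-- Pushing between two layers of different sizes. -/
theorem mul_card_pushLayer_le (hF : IsMaxIntersectingFamily k t F) (hs : IsShifted F) {p : Fin n}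
    (hm : IsExchangeable {v | (p : ℕ) + 1 ≤ v} F) (hn : 2 * k < n + t) {i j a c : ℕ}
    (hij : i + j = p + 1 + t) (hne : i ≠ j) (ha : a + i = k) (hc : c + a + (p + 1) = n) :
    c * #(pushLayer p i F) ≤ (a + 1) * #(pushLayer p j F) := by
  have hcard := fun A hA => card_sdiff_initSeg_of_mem_pushLayer hF.1 (p := p) (i := i) (A := A) hA
  refine (mul_card_le_mul_card_push (p := p)
    (fun A hA => (mem_of_mem_pushBoundary (mem_filter.1 hA).1).2)
    (fun A hA => show _ = a by have := hcard A hA; omega)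
    (fun A hA => show _ = c by have := hcard A hA; omega)).trans
    (Nat.mul_le_mul_left _ (card_push_le hF hs hm hn (filter_subset _ _)
      (fun A hA => (mem_of_mem_pushBoundary (mem_filter.1 hA).1).1) ?_ ?_))
  · intro A hA B hB hpB h
    obtain ⟨hA', rfl⟩ := mem_filter.1 hA
    obtain ⟨hAF, hpA⟩ := mem_of_mem_pushBoundary hA'
    have h1 := le_card_inter_initSeg hF.1 hs hm hn hAF hB
    have h2 := card_inter_initSeg_of_subset_union (M := p + 1) p.2
      (initSeg_subset_union hF.1 hs hm hn hAF hB hpA hpB h)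
    exact mem_filter.2
      ⟨mem_pushBoundary_of_card_inter_le hF.1 hs hm hn hAF hB hpA hpB h, by omega⟩
  · intro A hA B hB
    obtain ⟨hA, hAi⟩ := mem_filter.1 hA
    obtain ⟨hAF, hpA⟩ := mem_of_mem_pushBoundary hA
    obtain ⟨hB, hBi⟩ := mem_filter.1 hB
    obtain ⟨hBF, hpB⟩ := mem_of_mem_pushBoundary hB
    by_contra hcon
    have h1 := le_card_inter_initSeg hF.1 hs hm hn hAF hBF
    have h2 := card_inter_initSeg_of_subset_union (M := p + 1) p.2
      (initSeg_subset_union hF.1 hs hm hn hAF hBF hpA hpB (by omega))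
    omega

/-- Pushing within the middle layer, restricted to the sets avoiding `l`. -/
theorem mul_card_pushLayer_filter_le (hF : IsMaxIntersectingFamily k t F) (hs : IsShifted F)
    {p : Fin n} (hm : IsExchangeable {v | (p : ℕ) + 1 ≤ v} F) (hn : 2 * k < n + t) {i a c : ℕ}
    (hi : i + i = p + 1 + t) (ha : a + i = k) (hc : c + a + (p + 1) = n) {l : Fin n}
    (hl : l < p) :
    c * #((pushLayer p i F).filter fun A => l ∉ A) ≤
      (a + 1) * #((pushLayer p i F).filter fun A => l ∈ A) := by
  have hcard := fun A hA => card_sdiff_initSeg_of_mem_pushLayer hF.1 (p := p) (i := i) (A := A) hA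
  have hmem : ∀ A ∈ pushLayer p i F, A ∈ F ∧ p ∈ A := fun A hA =>
    mem_of_mem_pushBoundary (mem_filter.1 hA).1
  have hlp : l ∈ initSeg n (p + 1) := by simp only [mem_initSeg]; omega
  refine (mul_card_le_mul_card_push (p := p)
    (fun A hA => (hmem A (mem_filter.1 hA).1).2)
    (fun A hA => show _ = a by have := hcard A (mem_filter.1 hA).1; omega)
    (fun A hA => show _ = c by have := hcard A (mem_filter.1 hA).1; omega)).trans
    (Nat.mul_le_mul_left _ (card_push_le hF hs hm hn
      ((filter_subset _ _).trans (filter_subset _ _))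
      (fun A hA => (hmem A (mem_filter.1 hA).1).1) ?_ ?_))
  · intro A hA B hB hpB h
    obtain ⟨hA, hlA⟩ := mem_filter.1 hA
    obtain ⟨hAF, hpA⟩ := hmem A hA
    have hsub := initSeg_subset_union hF.1 hs hm hn hAF hB hpA hpB h
    have h1 := le_card_inter_initSeg hF.1 hs hm hn hAF hB
    have h2 := card_inter_initSeg_of_subset_union (M := p + 1) p.2 hsub
    have h3 := (mem_filter.1 hA).2
    exact mem_filter.2 ⟨mem_filter.2
      ⟨mem_pushBoundary_of_card_inter_le hF.1 hs hm hn hAF hB hpA hpB h, by omega⟩,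
      (mem_union.1 (hsub hlp)).resolve_left hlA⟩
  · intro A hA B hB
    obtain ⟨hA, hlA⟩ := mem_filter.1 hA
    obtain ⟨hAF, hpA⟩ := hmem A hA
    obtain ⟨hB, hlB⟩ := mem_filter.1 hB
    obtain ⟨hBF, hpB⟩ := hmem B hB
    by_contra hcon
    have hsub := initSeg_subset_union hF.1 hs hm hn hAF hBF hpA hpB (by omega)
    exact (mem_union.1 (hsub hlp)).elim hlA hlB

theorem mul_le_of_mem_pushLayer (hF : IsMaxIntersectingFamily k t F) (hs : IsShifted F)
    {p : Fin n} (hm : IsExchangeable {v | (p : ℕ) + 1 ≤ v} F) (hn : 2 * k < n + t) {i a c : ℕ}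
    (hi : i + i = p + 1 + t) (ha : a + i = k) (hc : c + a + (p + 1) = n)
    (hne : (pushLayer p i F).Nonempty) : c * (p + 1 - i) ≤ (a + 1) * (i - 1) := by
  have hsum : c * ∑ l ∈ initSeg n p, #((pushLayer p i F).filter fun A => l ∉ A) ≤
      (a + 1) * ∑ l ∈ initSeg n p, #((pushLayer p i F).filter fun A => l ∈ A) := by
    rw [mul_sum, mul_sum]
    exact sum_le_sum fun l hl =>
      mul_card_pushLayer_filter_le hF hs hm hn hi ha hc (by simpa using hl)
  have hA : ∀ A ∈ pushLayer p i F, #((initSeg n p).filter fun l => l ∈ A) = i - 1 := by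
    intro A hA
    obtain ⟨hA', rfl⟩ := mem_filter.1 hA
    have hpA := (mem_of_mem_pushBoundary hA').2
    rw [← card_erase_of_mem (a := p) (by simp [hpA])]
    congr 1
    ext v
    simp only [mem_filter, mem_initSeg, mem_erase, mem_inter]
    have : v ≠ p ↔ (v : ℕ) ≠ p := by rw [Ne, Fin.ext_iff]
    grind
  have hA' : ∀ A ∈ pushLayer p i F, #((initSeg n p).filter fun l => l ∉ A) = p + 1 - i := by
    intro A hA'
    have h1 := card_filter_add_card_filter_not (s := initSeg n p) (fun l => l ∈ A)
    have hp : p ∈ A ∩ initSeg n (p + 1) := by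
      simp [(mem_of_mem_pushBoundary (mem_filter.1 hA').1).2]
    have h2 : 0 < i := (mem_filter.1 hA').2 ▸ card_pos.2 ⟨p, hp⟩
    rw [hA A hA', card_initSeg p.2.le] at h1
    omega
  have h1 := sum_card_bipartiteAbove_eq_sum_card_bipartiteBelow
    (s := initSeg n p) (t := pushLayer p i F) (fun l A => l ∈ A)
  have h2 := sum_card_bipartiteAbove_eq_sum_card_bipartiteBelow
    (s := initSeg n p) (t := pushLayer p i F) (fun l A => l ∉ A)
  simp only [bipartiteAbove, bipartiteBelow] at h1 h2
  rw [sum_congr rfl hA, sum_const, smul_eq_mul] at h1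
  rw [sum_congr rfl hA', sum_const, smul_eq_mul] at h2
  rw [h1, h2, mul_left_comm, mul_left_comm (a + 1)] at hsum
  exact Nat.le_of_mul_le_mul_left hsum (card_pos.2 hne)

/-- A maximum shifted family is symmetric outside of a short initial segment. -/
theorem exists_isExchangeable (hF : IsMaxIntersectingFamily k t F) (hs : IsShifted F)
    (hne : F.Nonempty) (ht : 1 ≤ t) (hn : 2 * k + 2 ≤ n + t) :
    ∃ q, t + 2 * q ≤ n ∧ IsExchangeable {v | t + 2 * q ≤ (v : ℕ)} F ∧
      (q : ℤ) * (n + 2 * t - 2 - 2 * k) ≤ (k - t + 1) * (t - 1) := by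
  classical
  have hexn : IsExchangeable {v | n ≤ (v : ℕ)} F := fun A _ x hx => absurd x.2 (not_lt.2 hx)
  have hex : ∃ m, IsExchangeable {v | m ≤ (v : ℕ)} F := ⟨n, hexn⟩
  have hmin := fun m' => Nat.find_min hex (m := m')
  have hle := Nat.find_min' hex hexn
  have hm := Nat.find_spec hex
  generalize Nat.find hex = m at hmin hle hm
  have hn' : 2 * k < n + t := by omega
  have hm0 : m ≠ 0 := by
    rintro rfl
    obtain ⟨A, hA⟩ := hne
    have := le_card_inter_initSeg hF.1 hs hm hn' hA hA
    simp [initSeg] at this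
    omega
  obtain ⟨p, rfl⟩ : ∃ p : Fin n, (p : ℕ) + 1 = m :=
    ⟨⟨m - 1, by omega⟩, by simp only; omega⟩
  obtain ⟨A₀, hA₀⟩ : (pushBoundary p F).Nonempty := by
    by_contra! hemp
    refine hmin p (by omega) fun A hA x hx y hy hxA hyA => ?_
    have hx : (p : ℕ) ≤ x := hx
    have hy : (p : ℕ) ≤ y := hy
    rcases lt_trichotomy x y with hxy | rfl | hxy
    · by_cases hxp : x = p
      · subst hxp
        by_contra hcon
        exact eq_empty_iff_forall_notMem.1 hemp A (mem_filter.2 ⟨hA, hxA, y, hxy, hyA, hcon⟩)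
      · have : (x : ℕ) ≠ p := fun h => hxp (Fin.ext h)
        exact hm A hA x (show (p : ℕ) + 1 ≤ x by omega) y (show (p : ℕ) + 1 ≤ y by omega) hxA hyA
    · exact absurd hxA hyA
    · exact hs A hA x y hxy hxA hyA
  obtain ⟨i, hi⟩ : ∃ i, #(A₀ ∩ initSeg n (p + 1)) = i := ⟨_, rfl⟩
  have hA₀' : A₀ ∈ pushLayer p i F := mem_filter.2 ⟨hA₀, hi⟩
  have hA₀F := (mem_of_mem_pushBoundary hA₀).1
  obtain ⟨ha, hc, hc0⟩ := card_sdiff_initSeg_of_mem_pushLayer hF.1 hA₀'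
  generalize #(A₀ \ initSeg n (p + 1)) = a at ha hc
  generalize #(univ.filter fun z => p < z ∧ z ∉ A₀) = c at hc hc0
  have hti : t ≤ i := by
    have := le_card_inter_initSeg hF.1 hs hm hn' hA₀F hA₀F
    rwa [inter_self, hi] at this
  have hip : i ≤ p + 1 := by
    rw [← hi]
    exact (card_le_card inter_subset_right).trans_eq (card_initSeg p.2)
  by_cases hii : i + i = p + 1 + t
  · have h := mul_le_of_mem_pushLayer hF hs hm hn' hii ha hc ⟨A₀, hA₀'⟩
    obtain ⟨q, rfl⟩ := Nat.exists_eq_add_of_le hti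
    refine ⟨q, by omega, ?_, ?_⟩
    · rwa [show t + 2 * q = p + 1 by omega]
    · obtain ⟨s, rfl⟩ := Nat.exists_eq_add_of_le' ht
      rw [show (p : ℕ) + 1 - (s + 1 + q) = q by omega,
        show s + 1 + q - 1 = s + q by omega] at h
      have hp : (p : ℕ) = s + 2 * q := by omega
      have hk : (k : ℤ) = a + (s + 1 + q) := by exact_mod_cast ha.symm
      have hn : (n : ℤ) = c + a + (s + 2 * q + 1) := by rw [hp] at hc; exact_mod_cast hc.symm
      zify at h
      rw [hk, hn]
      push_cast
      linarith
  · exfalso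
    obtain ⟨j, hj⟩ : ∃ j, i + j = p + 1 + t := ⟨p + 1 + t - i, by omega⟩
    have h1 := mul_card_pushLayer_le hF hs hm hn' hj (by omega) ha hc
    have hX : 0 < #(pushLayer p i F) := card_pos.2 ⟨A₀, hA₀'⟩
    have hY : 0 < #(pushLayer p j F) := by
      by_contra hcon
      rw [Nat.eq_zero_of_not_pos hcon, mul_zero] at h1
      exact absurd (Nat.mul_pos hc0 hX) (by omega)
    obtain ⟨B, hB⟩ := card_pos.1 hY
    obtain ⟨hb, hd, hd0⟩ := card_sdiff_initSeg_of_mem_pushLayer hF.1 hB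
    generalize #(B \ initSeg n (p + 1)) = b at hb hd
    generalize #(univ.filter fun z => p < z ∧ z ∉ B) = d at hd hd0
    have h2 := mul_card_pushLayer_le hF hs hm hn' (i := j) (j := i) (by omega) (by omega) hb hd
    have h3 : (b + 2) * #(pushLayer p i F) ≤ (a + 1) * #(pushLayer p j F) :=
      (Nat.mul_le_mul_right _ (by omega)).trans h1
    have h4 : (a + 2) * #(pushLayer p j F) ≤ (b + 1) * #(pushLayer p i F) :=
      (Nat.mul_le_mul_right _ (by omega)).trans h2
    nlinarith

/-- The Frankl family `B_i`. -/
def franklFamily (n k t i : ℕ) : Finset (Finset (Fin n)) :=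
  (powersetCard k univ).filter fun A => t + i ≤ #(A ∩ initSeg n (t + 2 * i))

theorem subset_franklFamily (hF : ∀ A ∈ F, #A = k) {i : ℕ}
    (h : ∀ A ∈ F, t + i ≤ #(A ∩ initSeg n (t + 2 * i))) : F ⊆ franklFamily n k t i :=
  fun A hA => mem_filter.2 ⟨mem_powersetCard.2 ⟨subset_univ _, hF A hA⟩, h A hA⟩

/-- `B` can be moved inside `F` so that together with `A` it covers the segment `[M]`. -/
theorem exists_initSeg_subset_union (hs : IsShifted F) {M M' : ℕ} (hMM' : M ≤ M')
    (hM : IsExchangeable {v | (v : ℕ) < M} F) (ht : 1 ≤ t)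
    (hint : ∀ A ∈ F, ∀ B ∈ F, t ≤ #(A ∩ B ∩ initSeg n M'))
    {A B : Finset (Fin n)} (hA : A ∈ F) (hB : B ∈ F) :
    ∃ C ∈ F, #(C ∩ initSeg n M') = #(B ∩ initSeg n M') ∧ initSeg n M ⊆ A ∪ C := by
  induction h : #(A ∩ B ∩ initSeg n M') using Nat.strong_induction_on generalizing B with
  | _ d ih =>
    by_cases hsub : initSeg n M ⊆ A ∪ B
    · exact ⟨B, hB, rfl, hsub⟩
    obtain ⟨j, hj, hjAB⟩ := not_subset.1 hsub
    obtain ⟨c, hc⟩ : (A ∩ B ∩ initSeg n M').Nonempty := by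
      rw [← card_pos]
      exact ht.trans (hint A hA B hB)
    simp only [mem_inter, mem_initSeg, mem_union, not_or] at hc hj hjAB
    have hC : exchange c j B ∈ F := by
      by_cases hcM : (c : ℕ) < M
      · exact hM B hB c hcM j hj hc.1.2 hjAB.2
      · exact hs B hB c j (Fin.lt_def.2 (by omega)) hc.1.2 hjAB.2
    have h1 : exchange c j B ∩ initSeg n M' = exchange c j (B ∩ initSeg n M') := by
      ext v
      simp only [mem_inter, mem_exchange, mem_initSeg]
      have : v = j → (v : ℕ) < M' := by rintro rfl; omega
      grind
    have h2 : A ∩ exchange c j B ∩ initSeg n M' = (A ∩ B ∩ initSeg n M').erase c := by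
      ext v
      simp only [mem_inter, mem_exchange, mem_erase]
      grind
    have hcmem : c ∈ A ∩ B ∩ initSeg n M' := by simp [hc]
    have hpos := card_pos.2 ⟨c, hcmem⟩
    obtain ⟨C, hCF, hCc, hCs⟩ := ih _ (by rw [h2, card_erase_of_mem hcmem]; omega) hC rfl
    exact ⟨C, hCF, by rw [hCc, h1, card_exchange (by simp [hc]) (by simp [hjAB])], hCs⟩

theorem subset_franklFamily_of_isExchangeable (hF : ∀ A ∈ F, #A = k) (hs : IsShifted F) {q : ℕ}
    (hq : t + 2 * q ≤ n) (hM : IsExchangeable {v | (v : ℕ) < t + 2 * q} F) (ht : 1 ≤ t)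
    (hint : ∀ A ∈ F, ∀ B ∈ F, t ≤ #(A ∩ B ∩ initSeg n (t + 2 * q))) :
    F ⊆ franklFamily n k t q := by
  refine subset_franklFamily hF fun A hA => ?_
  obtain ⟨C, hC, hCA, hsub⟩ := exists_initSeg_subset_union hs le_rfl hM ht hint hA hA
  have h1 := card_inter_initSeg_of_subset_union hq hsub
  have h2 := hint A hA C hC
  omega

theorem subset_franklFamily_or_of_isExchangeable (hF : ∀ A ∈ F, #A = k) (hs : IsShifted F) {q : ℕ}
    (hq : t + 2 * q + 2 ≤ n) (hM : IsExchangeable {v | (v : ℕ) < t + 2 * q} F) (ht : 1 ≤ t)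
    (hint : ∀ A ∈ F, ∀ B ∈ F, t ≤ #(A ∩ B ∩ initSeg n (t + 2 * q + 2))) :
    F ⊆ franklFamily n k t q ∨ F ⊆ franklFamily n k t (q + 1) := by
  by_cases hall : ∀ A ∈ F, t + q ≤ #(A ∩ initSeg n (t + 2 * q))
  · exact Or.inl (subset_franklFamily hF hall)
  push Not at hall
  obtain ⟨A, hA, hAq⟩ := hall
  refine Or.inr (subset_franklFamily hF fun B hB => ?_)
  obtain ⟨C, hC, hCB, hsub⟩ := exists_initSeg_subset_union hs
    (show t + 2 * q ≤ t + 2 * q + 2 by omega) hM ht hint hA hB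
  rw [show t + 2 * (q + 1) = t + 2 * q + 2 by ring, ← hCB]
  have h1 := card_inter_initSeg_of_subset_union (by omega) hsub
  have h2 := hint A hA C hC
  have hmono : initSeg n (t + 2 * q) ⊆ initSeg n (t + 2 * q + 2) := fun v => by
    simp only [mem_initSeg]; omega
  have h3 := card_sdiff_add_card_inter (C ∩ initSeg n (t + 2 * q + 2)) (initSeg n (t + 2 * q))
  have h4 := card_sdiff_add_card_inter (A ∩ C ∩ initSeg n (t + 2 * q + 2)) (initSeg n (t + 2 * q))
  rw [inter_assoc, inter_eq_right.2 hmono] at h3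
  rw [inter_assoc (A ∩ C) _ (initSeg n (t + 2 * q)), inter_eq_right.2 hmono] at h4
  have h5 : #((A ∩ C ∩ initSeg n (t + 2 * q + 2)) \ initSeg n (t + 2 * q)) ≤
      #((C ∩ initSeg n (t + 2 * q + 2)) \ initSeg n (t + 2 * q)) := by
    refine card_le_card (sdiff_subset_sdiff (inter_subset_inter_right inter_subset_right) le_rfl)
  omega

/-- The complement of the mirror image of `A`. -/
def revCompl {n : ℕ} (A : Finset (Fin n)) : Finset (Fin n) := univ.filter fun v => v.rev ∉ A

theorem mem_revCompl {A : Finset (Fin n)} {v : Fin n} : v ∈ revCompl A ↔ v.rev ∉ A := by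
  simp [revCompl]

theorem revCompl_revCompl (A : Finset (Fin n)) : revCompl (revCompl A) = A := by
  ext v
  simp [mem_revCompl]

theorem revCompl_injective : Function.Injective (revCompl (n := n)) :=
  Function.LeftInverse.injective revCompl_revCompl

theorem card_revCompl (A : Finset (Fin n)) : #(revCompl A) + #A = n := by
  have h : #(revCompl A) = #Aᶜ := by
    refine card_bij (fun v _ => v.rev) (fun v hv => ?_) (fun v _ w _ h => Fin.rev_injective h)
      fun v hv => ⟨v.rev, ?_, Fin.rev_rev v⟩
    · simpa [mem_revCompl] using hv
    · simpa [mem_revCompl] using hv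
  rw [h, card_compl_add_card, Fintype.card_fin]

theorem revCompl_inter (A B : Finset (Fin n)) :
    revCompl A ∩ revCompl B = revCompl (A ∪ B) := by
  ext v
  simp [mem_revCompl]

theorem revCompl_exchange {A : Finset (Fin n)} {x y : Fin n} (hx : x ∈ A) (hy : y ∉ A) :
    revCompl (exchange x y A) = exchange y.rev x.rev (revCompl A) := by
  ext v
  simp only [mem_revCompl, mem_exchange, Fin.rev_eq_iff]
  have h : v = y.rev → v.rev = y := by rintro rfl; exact Fin.rev_rev y
  have h' : v = x.rev → v.rev = x := by rintro rfl; exact Fin.rev_rev x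
  grind

theorem IsIntersectingFamily.image_revCompl (hF : IsIntersectingFamily k t F)
    (h : 2 * k ≤ n + t) :
    IsIntersectingFamily (n - k) (n + t - 2 * k) (F.image revCompl) := by
  refine ⟨fun A hA => ?_, fun A hA B hB => ?_⟩
  · obtain ⟨A, hA', rfl⟩ := mem_image.1 hA
    have h1 := card_revCompl A
    have h2 := hF.1 A hA'
    omega
  · obtain ⟨A, hA', rfl⟩ := mem_image.1 hA
    obtain ⟨B, hB', rfl⟩ := mem_image.1 hB
    have h1 := card_revCompl (A ∪ B)
    have h2 := card_union_add_card_inter A B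
    have h3 := hF.2 A hA' B hB'
    rw [hF.1 A hA', hF.1 B hB'] at h2
    rw [revCompl_inter]
    omega

theorem IsMaxIntersectingFamily.image_revCompl (hF : IsMaxIntersectingFamily k t F)
    (hk : k ≤ n) (h : 2 * k ≤ n + t) :
    IsMaxIntersectingFamily (n - k) (n + t - 2 * k) (F.image revCompl) := by
  refine ⟨hF.1.image_revCompl h, fun G hG => ?_⟩
  have h1 := hG.image_revCompl (by omega)
  rw [show n - (n - k) = k by omega, show n + (n + t - 2 * k) - 2 * (n - k) = t by omega] at h1
  have h2 := hF.2 _ h1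
  rwa [card_image_of_injective _ revCompl_injective] at h2 ⊢

theorem IsShifted.image_revCompl (hs : IsShifted F) : IsShifted (F.image revCompl) := by
  intro A hA x y hyx hx hy
  obtain ⟨A, hA', rfl⟩ := mem_image.1 hA
  rw [mem_revCompl] at hx hy
  rw [not_not] at hy
  refine mem_image.2 ⟨_, hs A hA' y.rev x.rev (Fin.rev_lt_rev.2 hyx) hy hx, ?_⟩
  rw [revCompl_exchange hy hx, Fin.rev_rev, Fin.rev_rev]

theorem isExchangeable_of_image_revCompl {m M : ℕ} (hmM : m + M ≤ n)
    (h : IsExchangeable {v | m ≤ (v : ℕ)} (F.image revCompl)) :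
    IsExchangeable {v | (v : ℕ) < M} F := by
  intro A hA x hx y hy hxA hyA
  have hx : (x : ℕ) < M := hx
  have hy : (y : ℕ) < M := hy
  have h1 := h _ (mem_image_of_mem _ hA) y.rev
    (show m ≤ (y.rev : ℕ) by rw [Fin.val_rev]; omega) x.rev
    (show m ≤ (x.rev : ℕ) by rw [Fin.val_rev]; omega)
    (by rwa [mem_revCompl, Fin.rev_rev]) (by rwa [mem_revCompl, Fin.rev_rev, not_not])
  rw [← revCompl_exchange hxA hyA] at h1
  obtain ⟨B, hB, hBA⟩ := mem_image.1 h1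
  rwa [← revCompl_injective hBA]

/-- The shift of `F` that replaces `x` by `y` whenever possible. -/
def shift {n : ℕ} (x y : Fin n) (F : Finset (Finset (Fin n))) : Finset (Finset (Fin n)) :=
  F.image fun A => if x ∈ A ∧ y ∉ A ∧ exchange x y A ∉ F then exchange x y A else A

theorem exchange_exchange {x y : Fin n} {A : Finset (Fin n)} (hx : x ∈ A) (hy : y ∉ A) :
    exchange y x (exchange x y A) = A := by
  ext v
  simp only [mem_exchange]
  grind

theorem card_shift (x y : Fin n) : #(shift x y F) = #F := by
  refine card_image_of_injOn fun A hA B hB h => ?_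
  simp only [mem_coe] at hA hB
  split_ifs at h with h1 h2 h2
  · rw [← exchange_exchange h1.1 h1.2.1, h, exchange_exchange h2.1 h2.2.1]
  · exact absurd (h ▸ hB) h1.2.2
  · exact absurd (h ▸ hA) h2.2.2
  · exact h

theorem card_exchange_inter_exchange {x y : Fin n} {A B : Finset (Fin n)} (hxA : x ∈ A)
    (hyA : y ∉ A) (hxB : x ∈ B) (hyB : y ∉ B) :
    #(exchange x y A ∩ exchange x y B) = #(A ∩ B) := by
  rw [← card_exchange (x := x) (y := y) (A := A ∩ B) (by simp [*]) (by simp [*])]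
  congr 1
  ext v
  simp only [mem_inter, mem_exchange]
  grind

theorem le_card_exchange_inter (hF : IsIntersectingFamily k t F) {x y : Fin n}
    {A B : Finset (Fin n)} (hA : A ∈ F) (hB : B ∈ F) (hxA : x ∈ A) (hyA : y ∉ A)
    (h : x ∈ B → y ∉ B → exchange x y B ∈ F) : t ≤ #(exchange x y A ∩ B) := by
  by_cases hxB : x ∈ B
  · by_cases hyB : y ∈ B
    · refine (hF.2 A hA B hB).trans ?_
      rw [← card_exchange (x := x) (y := y) (A := A ∩ B) (by simp [*]) (by simp [*])]
      refine card_le_card fun v => ?_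
      simp only [mem_inter, mem_exchange]
      grind
    · refine (hF.2 A hA _ (h hxB hyB)).trans (card_le_card fun v => ?_)
      simp only [mem_inter, mem_exchange]
      grind
  · refine (hF.2 A hA B hB).trans (card_le_card fun v => ?_)
    simp only [mem_inter, mem_exchange]
    grind

theorem IsIntersectingFamily.shift (hF : IsIntersectingFamily k t F) (x y : Fin n) :
    IsIntersectingFamily k t (shift x y F) := by
  refine ⟨fun A hA => ?_, fun A hA B hB => ?_⟩
  · obtain ⟨A, hA', rfl⟩ := mem_image.1 hA
    split_ifs with h
    · rw [card_exchange h.1 h.2.1, hF.1 A hA']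
    · exact hF.1 A hA'
  · obtain ⟨A, hA', rfl⟩ := mem_image.1 hA
    obtain ⟨B, hB', rfl⟩ := mem_image.1 hB
    split_ifs with h1 h2 h2
    · rw [card_exchange_inter_exchange h1.1 h1.2.1 h2.1 h2.2.1]
      exact hF.2 A hA' B hB'
    · exact le_card_exchange_inter hF hA' hB' h1.1 h1.2.1 (by tauto)
    · rw [inter_comm]
      exact le_card_exchange_inter hF hB' hA' h2.1 h2.2.1 (by tauto)
    · exact hF.2 A hA' B hB'

theorem sum_exchange_lt {x y : Fin n} (hyx : y < x) {A : Finset (Fin n)} (hx : x ∈ A)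
    (hy : y ∉ A) : ∑ v ∈ exchange x y A, (v : ℕ) < ∑ v ∈ A, (v : ℕ) := by
  rw [exchange, sum_insert (by simp [hy]), ← add_sum_erase A _ hx]
  exact Nat.add_lt_add_right hyx _

theorem sum_shift_lt {x y : Fin n} (hyx : y < x) {A : Finset (Fin n)} (hA : A ∈ F) (hx : x ∈ A)
    (hy : y ∉ A) (hAF : exchange x y A ∉ F) :
    ∑ B ∈ shift x y F, ∑ v ∈ B, (v : ℕ) < ∑ B ∈ F, ∑ v ∈ B, (v : ℕ) := by
  rw [shift, sum_image (card_image_iff.1 (card_shift x y))]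
  refine sum_lt_sum (fun B _ => ?_) ⟨A, hA, ?_⟩
  · split_ifs with h
    · exact (sum_exchange_lt hyx h.1 h.2.1).le
    · exact le_rfl
  · rw [if_pos ⟨hx, hy, hAF⟩]
    exact sum_exchange_lt hyx hx hy

theorem exists_isMaxIntersectingFamily (n k t : ℕ) :
    ∃ F : Finset (Finset (Fin n)), IsMaxIntersectingFamily k t F ∧ IsShifted F := by
  classical
  obtain ⟨F₀, hF₀, hmax⟩ := exists_max_image
    (univ.filter fun F : Finset (Finset (Fin n)) => IsIntersectingFamily k t F) card
    ⟨∅, mem_filter.2 ⟨mem_univ _, by simp [IsIntersectingFamily]⟩⟩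
  obtain ⟨F, hF, hmin⟩ := exists_min_image
    (univ.filter fun F : Finset (Finset (Fin n)) => IsMaxIntersectingFamily k t F)
    (fun F => ∑ B ∈ F, ∑ v ∈ B, (v : ℕ))
    ⟨F₀, mem_filter.2 ⟨mem_univ _, (mem_filter.1 hF₀).2,
      fun G hG => hmax G (mem_filter.2 ⟨mem_univ _, hG⟩)⟩⟩
  simp only [mem_filter, mem_univ, true_and] at hF hmin
  refine ⟨F, hF, fun A hA x y hyx hx hy => ?_⟩
  by_contra hcon
  refine absurd (hmin (shift x y F) ⟨hF.1.shift x y, ?_⟩)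
    (not_le.2 (sum_shift_lt hyx hA hx hy hcon))
  rw [card_shift]
  exact hF.2

theorem IsIntersectingFamily.card_le_of_eq (hF : IsIntersectingFamily k t F) (ht : 1 ≤ t)
    (htk : t ≤ k) (hn : n + t = 2 * k + 1) : #F ≤ #(franklFamily n k t (k - t)) := by
  have h1 := hF.image_revCompl (by omega)
  rw [show n + t - 2 * k = 1 by omega] at h1
  have h2 : ((F.image revCompl : Finset (Finset (Fin n))) : Set (Finset (Fin n))).Intersecting := by
    intro A hA B hB hd
    have := h1.2 A hA B hB
    rw [disjoint_iff_inter_eq_empty.1 hd] at this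
    simp at this
  have h3 := erdos_ko_rado h2 (fun A hA => h1.1 A hA) (by omega)
  rw [card_image_of_injective _ revCompl_injective] at h3
  calc #F ≤ (n - 1).choose (n - k - 1) := h3
    _ = #(powersetCard k (initSeg n (n - 1))) := by
      rw [card_powersetCard, card_initSeg (by omega), ← Nat.choose_symm (by omega)]
      congr 1
      omega
    _ ≤ _ := by
      refine card_le_card (subset_franklFamily (fun A hA => (mem_powersetCard.1 hA).2)
        fun A hA => ?_)
      obtain ⟨hA, hAk⟩ := mem_powersetCard.1 hA
      rw [show t + 2 * (k - t) = n - 1 by omega, inter_eq_left.2 hA]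
      omega

theorem IsIntersectingFamily.card_le_of_le (hF : IsIntersectingFamily k t F)
    (hn : n + t ≤ 2 * k) (htn : t ≤ n) : #F ≤ #(franklFamily n k t ((n - t) / 2)) := by
  refine card_le_card (subset_franklFamily hF.1 fun A hA => ?_)
  have h1 := card_sdiff_add_card_inter A (initSeg n (t + 2 * ((n - t) / 2)))
  have h2 : #(A \ initSeg n (t + 2 * ((n - t) / 2))) ≤ n - (t + 2 * ((n - t) / 2)) := by
    have h3 := card_compl (initSeg n (t + 2 * ((n - t) / 2)))
    rw [card_initSeg (by omega), Fintype.card_fin] at h3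
    rw [← h3]
    exact card_le_card fun v hv => by simpa using (mem_sdiff.1 hv).2
  have h4 := hF.1 A hA
  omega

theorem IsMaxIntersectingFamily.exists_subset_franklFamily (hF : IsMaxIntersectingFamily k t F)
    (hs : IsShifted F) (hne : F.Nonempty) (ht : 1 ≤ t) (htk : t ≤ k) (hn : 2 * k + 2 ≤ n + t) :
    ∃ i, t + 2 * i ≤ n ∧ F ⊆ franklFamily n k t i := by
  have hkn : k ≤ n := by
    obtain ⟨A, hA⟩ := hne
    rw [← hF.1.1 A hA]
    exact (card_le_univ A).trans_eq (Fintype.card_fin n)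
  obtain ⟨q, hqn, hq, hqle⟩ := exists_isExchangeable hF hs hne ht hn
  have hint := fun A hA B hB =>
    le_card_inter_initSeg hF.1 hs hq (by omega) (A := A) (B := B) hA hB
  rcases ht.eq_or_lt with rfl | ht2
  · have hq0 : q = 0 := by
      by_contra hcon
      have : (0 : ℤ) < q * (n + 2 * (1 : ℕ) - 2 - 2 * k) := by
        apply mul_pos <;> omega
      simp only [Nat.cast_one, sub_self, mul_zero] at hqle this
      omega
    subst hq0
    refine ⟨0, hqn, subset_franklFamily hF.1.1 fun A hA => ?_⟩
    simpa using hint A hA A hA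
  obtain ⟨q', hqn', hq', hqle'⟩ := exists_isExchangeable (hF.image_revCompl hkn (by omega))
    hs.image_revCompl (hne.image _) (by omega) (by omega)
  rw [Nat.cast_sub (by omega), Nat.cast_sub (by omega)] at hqle'
  push_cast at hqle'
  have hD : (0 : ℤ) < n + 2 * t - 2 * k - 2 := by omega
  have hsum : q + q' ≤ k - t + 1 := by
    have : (q + q' : ℤ) * (n + 2 * t - 2 * k - 2) ≤ (k - t + 1) * (n + 2 * t - 2 * k - 2) := by
      linarith
    have := le_of_mul_le_mul_right this hD
    omega
  rcases hsum.lt_or_eq with hlt | heq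
  · exact ⟨q, hqn, subset_franklFamily_of_isExchangeable hF.1.1 hs hqn
      (isExchangeable_of_image_revCompl (by omega) hq') ht hint⟩
  · have hq0 : q ≠ 0 := by
      rintro rfl
      have hq'k : (q' : ℤ) = k - t + 1 := by omega
      rw [hq'k] at hqle'
      have : (0 : ℤ) < (k - t + 1) * (t - 1) := by apply mul_pos <;> omega
      linarith
    obtain ⟨r, rfl⟩ := Nat.exists_eq_succ_of_ne_zero hq0
    rcases subset_franklFamily_or_of_isExchangeable hF.1.1 hs (q := r) (by omega)
      (isExchangeable_of_image_revCompl (by omega) hq') ht hint with h | h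
    · exact ⟨r, by omega, h⟩
    · exact ⟨r + 1, hqn, h⟩

theorem IsIntersectingFamily.exists_card_le (hF : IsIntersectingFamily k t F) (hne : F.Nonempty)
    (ht : 1 ≤ t) (htk : t ≤ k) : ∃ i, t + 2 * i ≤ n ∧ #F ≤ #(franklFamily n k t i) := by
  have hkn : k ≤ n := by
    obtain ⟨A, hA⟩ := hne
    rw [← hF.1 A hA]
    exact (card_le_univ A).trans_eq (Fintype.card_fin n)
  rcases lt_trichotomy (n + t) (2 * k + 1) with h | h | h
  · exact ⟨(n - t) / 2, by omega, hF.card_le_of_le (by omega) (by omega)⟩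
  · exact ⟨k - t, by omega, hF.card_le_of_eq ht htk h⟩
  · obtain ⟨G, hG, hs⟩ := exists_isMaxIntersectingFamily n k t
    have hFG := hG.2 F hF
    obtain ⟨i, hi, hsub⟩ := hG.exists_subset_franklFamily hs
      (card_pos.1 ((card_pos.2 hne).trans_le hFG)) ht htk (by omega)
    exact ⟨i, hi, hFG.trans (card_le_card hsub)⟩

end

end CompleteIntersection

/-- Ahlswede–Khachatrian complete intersection theorem. An `r`-uniform
`k`-intersecting hypergraph on `[n]` (here `Fin n`) has at most `max_{0 ≤ i ≤ (n-k)/2} |B_i|`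
edges, where `B_i` consists of all `r`-subsets `E` with `|E ∩ [k+2i]| ≥ k+i`. -/
theorem stmt_5 (n r k : ℕ) (hk : 1 ≤ k) (hkr : k < r)
    (E : Finset (Finset (Fin n)))
    (hunif : ∀ e ∈ E, e.card = r)
    (hint : ∀ e₁ ∈ E, ∀ e₂ ∈ E, k ≤ (e₁ ∩ e₂).card) :
    E.card ≤ (Finset.range ((n - k) / 2 + 1)).sup (fun i =>
      ((Finset.powersetCard r (Finset.univ : Finset (Fin n))).filter
        (fun e => k + i ≤ (e ∩ (Finset.univ.filter (fun v : Fin n => (v : ℕ) < k + 2 * i))).card)).card) := by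
  rcases E.eq_empty_or_nonempty with rfl | hne
  · simp
  obtain ⟨i, hi, hle⟩ := CompleteIntersection.IsIntersectingFamily.exists_card_le
    ⟨hunif, hint⟩ hne hk hkr.le
  refine hle.trans (Finset.le_sup (f := fun i => (CompleteIntersection.franklFamily n r k i).card)
    (Finset.mem_range.2 ?_))
  omega
end

section
/- Let $1 \le k < r$ and suppose $n \ge (k+1)(r-k+1)$. Then every $r$-uniform $k$-intersecting hypergraph on a vertex set of $n$ elements has at most $\binom{n-k}{r-k}$ edges. -/
namespace IntersectingFamily

open Finset

/-- Every two members of the family meet in at least `t` elements. -/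
def TIntersecting (t : ℕ) (𝒢 : Finset (Finset ℕ)) : Prop :=
  ∀ A ∈ 𝒢, ∀ B ∈ 𝒢, t ≤ #(A ∩ B)

/-- The number of ways to extend an `i`-set to an `s`-set by elements of a disjoint `N`-set. -/
def wt (N s i : ℕ) : ℕ := if i ≤ s then N.choose (s - i) else 0

/-- Replace `l` by `i` in `A` when this makes sense. -/
def shift (l i : ℕ) (A : Finset ℕ) : Finset ℕ :=
  if l ∈ A ∧ i ∉ A then insert i (A.erase l) else A

/-- Shift `A` unless the shifted set is already in the family. -/
def shiftIn (l i : ℕ) (𝒢 : Finset (Finset ℕ)) (A : Finset ℕ) : Finset ℕ :=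
  if shift l i A ∈ 𝒢 then A else shift l i A

lemma card_replace {l i : ℕ} {A : Finset ℕ} (h : l ∈ A) (h' : i ∉ A) :
    #(insert i (A.erase l)) = #A := by
  rw [card_insert_of_notMem (fun hi => h' (mem_of_mem_erase hi)), card_erase_add_one h]

lemma shiftIn_cases (l i : ℕ) {𝒢 : Finset (Finset ℕ)} {A : Finset ℕ} :
    (shiftIn l i 𝒢 A = A ∧ (l ∈ A → i ∉ A → insert i (A.erase l) ∈ 𝒢)) ∨
    (l ∈ A ∧ i ∉ A ∧ insert i (A.erase l) ∉ 𝒢 ∧ shiftIn l i 𝒢 A = insert i (A.erase l)) := by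
  unfold shiftIn shift
  by_cases h : l ∈ A ∧ i ∉ A
  · by_cases h2 : insert i (A.erase l) ∈ 𝒢
    · left; simp [h, h2]
    · right; simp [h, h2]
  · left
    refine ⟨by simp [h], fun h1 h2 => absurd ⟨h1, h2⟩ h⟩

lemma replace_injective {l i : ℕ} {A B : Finset ℕ} (hlA : l ∈ A) (hiA : i ∉ A)
    (hlB : l ∈ B) (hiB : i ∉ B) (h : insert i (A.erase l) = insert i (B.erase l)) : A = B := by
  ext x
  have := congrArg (x ∈ ·) h
  simp only [mem_insert, mem_erase, eq_iff_iff] at this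
  by_cases hx : x = l
  · subst hx; simp [hlA, hlB]
  · by_cases hi : x = i
    · subst hi; simp [hiA, hiB]
    · tauto

lemma shiftIn_injOn (l i : ℕ) (𝒢 : Finset (Finset ℕ)) :
    Set.InjOn (shiftIn l i 𝒢) 𝒢 := by
  intro A hA B hB h
  rcases shiftIn_cases l i (𝒢 := 𝒢) (A := A) with ⟨a1, a2⟩ | ⟨a1, a2, a3, a4⟩ <;>
  rcases shiftIn_cases l i (𝒢 := 𝒢) (A := B) with ⟨b1, b2⟩ | ⟨b1, b2, b3, b4⟩
  · rw [← a1, h, b1]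
  · rw [a1, b4] at h; exact absurd (h ▸ hA) b3
  · rw [a4, b1] at h; exact absurd (h ▸ hB) a3
  · rw [a4, b4] at h; exact replace_injective a1 a2 b1 b2 h

lemma card_inter_replace_left {l i : ℕ} {A B : Finset ℕ} (hl : l ∈ A) (hi : i ∉ A)
    (h : l ∈ B → i ∈ B) : #(A ∩ B) ≤ #(insert i (A.erase l) ∩ B) := by
  by_cases hlB : l ∈ B
  · have hiB := h hlB
    have : insert i (A.erase l) ∩ B = insert i ((A ∩ B).erase l) := by
      ext x; simp only [mem_inter, mem_insert, mem_erase]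
      by_cases hx : x = i
      · subst hx; simp [hiB]
      · tauto
    rw [this, card_replace (by simp [hl, hlB]) (by simp [hi])]
  · refine card_le_card fun x hx => ?_
    simp only [mem_inter, mem_insert, mem_erase] at hx ⊢
    refine ⟨Or.inr ⟨?_, hx.1⟩, hx.2⟩
    rintro rfl; exact hlB hx.2

lemma replace_inter_eq {l i : ℕ} {A B : Finset ℕ} (hiA : i ∉ A) (hiB : i ∉ B) :
    insert i (A.erase l) ∩ B = A ∩ insert i (B.erase l) := by
  ext x; simp only [mem_inter, mem_insert, mem_erase]
  by_cases hx : x = i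
  · subst hx; tauto
  · tauto

lemma card_replace_inter_replace {l i : ℕ} {A B : Finset ℕ} (hlA : l ∈ A) (hlB : l ∈ B)
    (hiA : i ∉ A) : #(insert i (A.erase l) ∩ insert i (B.erase l)) = #(A ∩ B) := by
  have : insert i (A.erase l) ∩ insert i (B.erase l) = insert i ((A ∩ B).erase l) := by
    ext x; simp only [mem_inter, mem_insert, mem_erase]; tauto
  rw [this, card_replace (by simp [hlA, hlB]) (by simp [hiA])]

lemma TIntersecting.image_shiftIn {t : ℕ} {𝒢 : Finset (Finset ℕ)} (h : TIntersecting t 𝒢)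
    (l i : ℕ) : TIntersecting t (𝒢.image (shiftIn l i 𝒢)) := by
  have key : ∀ A ∈ 𝒢, ∀ B ∈ 𝒢, l ∈ A → i ∉ A →
      (l ∈ B → i ∉ B → insert i (B.erase l) ∈ 𝒢) → t ≤ #(insert i (A.erase l) ∩ B) := by
    intro A hA B hB hl hi hBs
    by_cases hB2 : l ∈ B → i ∈ B
    · exact (h A hA B hB).trans (card_inter_replace_left hl hi hB2)
    · push Not at hB2
      rw [replace_inter_eq hi hB2.2]
      exact h A hA _ (hBs hB2.1 hB2.2)
  intro A' hA' B' hB'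
  obtain ⟨A, hA, rfl⟩ := mem_image.1 hA'
  obtain ⟨B, hB, rfl⟩ := mem_image.1 hB'
  rcases shiftIn_cases l i (𝒢 := 𝒢) (A := A) with ⟨a1, a2⟩ | ⟨a1, a2, a3, a4⟩ <;>
  rcases shiftIn_cases l i (𝒢 := 𝒢) (A := B) with ⟨b1, b2⟩ | ⟨b1, b2, b3, b4⟩
  · rw [a1, b1]; exact h A hA B hB
  · rw [a1, b4, inter_comm]; exact key B hB A hA b1 b2 a2
  · rw [a4, b1]; exact key A hA B hB a1 a2 b2
  · rw [a4, b4, card_replace_inter_replace a1 b1 a2]; exact h A hA B hB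

/-- A `t`-intersecting family on `range (l + 1)` can be replaced, without loss of weight, by one
closed under inserting `l` and under replacing `l` by a smaller element. -/
lemma exists_compressed (l t : ℕ) (c : ℕ → ℕ) (𝒢 : Finset (Finset ℕ))
    (h𝒢 : 𝒢 ⊆ (range (l + 1)).powerset) (hint : TIntersecting t 𝒢) :
    ∃ ℋ ⊆ (range (l + 1)).powerset, TIntersecting t ℋ ∧
      ∑ A ∈ 𝒢, c #A ≤ ∑ A ∈ ℋ, c #A ∧
      (∀ A ∈ ℋ, insert l A ∈ ℋ) ∧
      (∀ A ∈ ℋ, l ∈ A → ∀ i < l, i ∉ A → insert i (A.erase l) ∈ ℋ) := by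
  classical
  let ψ : Finset ℕ → ℕ := fun A => if l ∈ A then 1 else 2
  let Ω : Finset (Finset (Finset ℕ)) := (range (l + 1)).powerset.powerset.filter
    (fun ℋ => TIntersecting t ℋ ∧ ∑ A ∈ 𝒢, c #A ≤ ∑ A ∈ ℋ, c #A)
  have hΩ : 𝒢 ∈ Ω := by simp [Ω, hint]; exact h𝒢
  obtain ⟨ℋ, hℋ, hmax⟩ := exists_max_image Ω (fun ℋ => ∑ A ∈ ℋ, ψ A) ⟨𝒢, hΩ⟩
  simp only [Ω, mem_filter, mem_powerset (s := ℋ), mem_powerset] at hℋ hmax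
  obtain ⟨hsub, hH, hw⟩ := hℋ
  refine ⟨ℋ, hsub, hH, hw, fun A hA => ?_, fun A hA hl i hi hiA => ?_⟩
  · by_contra hn
    have := hmax (insert (insert l A) ℋ) ⟨?_, ?_, ?_⟩
    · rw [sum_insert hn] at this
      have : 0 < ψ (insert l A) := by simp [ψ]
      omega
    · refine insert_subset ?_ hsub
      have := mem_powerset.1 (hsub hA)
      rw [mem_powerset]
      exact insert_subset (by simp) this
    · intro X hX Y hY
      have aux : ∀ X ∈ insert (insert l A) ℋ, ∃ X' ∈ ℋ, X' ⊆ X := by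
        intro X hX
        rcases mem_insert.1 hX with rfl | hX
        · exact ⟨A, hA, subset_insert _ _⟩
        · exact ⟨X, hX, subset_rfl⟩
      obtain ⟨X', hX', hXs⟩ := aux X hX
      obtain ⟨Y', hY', hYs⟩ := aux Y hY
      exact (hH X' hX' Y' hY').trans (card_le_card (inter_subset_inter hXs hYs))
    · rw [sum_insert hn]; omega
  · by_contra hn
    have hinj := shiftIn_injOn l i ℋ
    have := hmax (ℋ.image (shiftIn l i ℋ)) ⟨?_, hH.image_shiftIn l i, ?_⟩
    · rw [sum_image hinj] at this
      refine absurd this (not_le.2 (sum_lt_sum (fun B hB => ?_) ⟨A, hA, ?_⟩))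
      · rcases shiftIn_cases l i (𝒢 := ℋ) (A := B) with ⟨b1, b2⟩ | ⟨b1, b2, b3, b4⟩
        · rw [b1]
        · simp only [ψ, b1, if_true]; split_ifs <;> omega
      · rcases shiftIn_cases l i (𝒢 := ℋ) (A := A) with ⟨b1, b2⟩ | ⟨b1, b2, b3, b4⟩
        · exact absurd (b2 hl hiA) hn
        · rw [b4]; simp [ψ, hl, hi.ne']
    · intro B' hB'
      obtain ⟨B, hB, rfl⟩ := mem_image.1 hB'
      have hBs := mem_powerset.1 (hsub hB)
      rcases shiftIn_cases l i (𝒢 := ℋ) (A := B) with ⟨b1, b2⟩ | ⟨b1, b2, b3, b4⟩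
      · rw [b1]; exact hsub hB
      · rw [b4, mem_powerset]
        exact insert_subset (by simp; omega) ((erase_subset _ _).trans hBs)
    · rw [sum_image hinj]
      refine hw.trans (sum_le_sum fun B hB => ?_)
      rcases shiftIn_cases l i (𝒢 := ℋ) (A := B) with ⟨b1, b2⟩ | ⟨b1, b2, b3, b4⟩
      · rw [b1]
      · rw [b4, card_replace b1 b2]

/-- From each pair `i + j = M` with `i ≠ j`, one can select the more profitable index. -/
lemma exists_selection (M : ℕ) (a c d : ℕ → ℕ)
    (h : ∀ i j, i + j = M → i ≠ j →
      a i * c i + a j * c j ≤ a i * d i ∨ a i * c i + a j * c j ≤ a j * d j) :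
    ∃ S : Finset ℕ, (∀ i ∈ S, ∀ j ∈ S, i + j ≠ M) ∧
      ∑ i ∈ range (M + 1), a i * c i ≤
        ∑ i ∈ range (M + 1), if i ∈ S then a i * d i else if 2 * i = M then a i * c i else 0 := by
  classical
  let good : ℕ → Prop := fun i => a i * c i + a (M - i) * c (M - i) ≤ a i * d i
  let S := (range (M + 1)).filter
    (fun i => (i < M - i ∧ good i) ∨ (M - i < i ∧ ¬ good (M - i)))
  have hS : ∀ i, i ∈ S ↔ i < M + 1 ∧ ((i < M - i ∧ good i) ∨ (M - i < i ∧ ¬ good (M - i))) := by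
    intro i; simp [S]
  refine ⟨S, ?_, ?_⟩
  · intro i hi j hj hij
    rw [hS] at hi hj
    obtain rfl : j = M - i := by omega
    have e : M - (M - i) = i := by omega
    rw [e] at hj
    rcases hi with ⟨_, ⟨h1, h2⟩ | ⟨h1, h2⟩⟩ <;> rcases hj with ⟨_, ⟨h3, h4⟩ | ⟨h3, h4⟩⟩ <;>
      omega
  · set g : ℕ → ℕ := fun i =>
      if i ∈ S then a i * d i else if 2 * i = M then a i * c i else 0 with hg
    have key : ∀ i ∈ range (M + 1),
        a i * c i + a (M - i) * c (M - i) ≤ g i + g (M - i) := by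
      have lt_case : ∀ i, i < M - i →
          a i * c i + a (M - i) * c (M - i) ≤ g i + g (M - i) := by
        intro i hlt
        have e : M - (M - i) = i := by omega
        by_cases hgd : good i
        · have : i ∈ S := (hS i).2 ⟨by omega, Or.inl ⟨hlt, hgd⟩⟩
          have : g i = a i * d i := by simp [hg, this]
          have : a i * c i + a (M - i) * c (M - i) ≤ a i * d i := hgd
          omega
        · have : M - i ∈ S := (hS _).2 ⟨by omega, Or.inr ⟨by omega, by rw [e]; exact hgd⟩⟩
          have : g (M - i) = a (M - i) * d (M - i) := by simp [hg, this]
          have := (h i (M - i) (by omega) (by omega)).resolve_left hgd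
          omega
      intro i hi
      rw [mem_range] at hi
      rcases lt_trichotomy i (M - i) with hlt | heq | hgt
      · exact lt_case i hlt
      · have hns : i ∉ S := by rw [hS]; omega
        have : g i = a i * c i := by
          simp only [hg, if_neg hns]; rw [if_pos (by omega)]
        rw [← heq, this]
      · have := lt_case (M - i) (by omega)
        have e : M - (M - i) = i := by omega
        rw [e] at this
        omega
    have := sum_le_sum key
    rw [sum_add_distrib, sum_add_distrib] at this
    have r1 : ∑ i ∈ range (M + 1), a (M - i) * c (M - i) = ∑ i ∈ range (M + 1), a i * c i :=
      sum_range_reflect (fun i => a i * c i) (M + 1)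
    have r2 : ∑ i ∈ range (M + 1), g (M - i) = ∑ i ∈ range (M + 1), g i :=
      sum_range_reflect g (M + 1)
    change _ ≤ ∑ i ∈ range (M + 1), g i
    omega

lemma wt_le_wt_succ (N r i : ℕ) : wt N r i ≤ wt (N + 1) (r + 1) i := by
  unfold wt
  split_ifs with h1 h2
  · rw [show r + 1 - i = r - i + 1 by omega, Nat.choose_succ_succ]; omega
  · omega
  · omega
  · exact le_rfl

lemma choose_mul_choose_le {N p q : ℕ} (h : p + q + 1 ≤ N) :
    N.choose p * N.choose q ≤ N.choose (p + 1) * N.choose (q + 1) := by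
  have hp := Nat.choose_succ_right_eq N p
  have hq := Nat.choose_succ_right_eq N q
  have h1 : (p + 1) * (q + 1) ≤ (N - q) * (N - p) :=
    Nat.mul_le_mul (by omega) (by omega)
  have h2 : (N.choose (p + 1) * N.choose (q + 1)) * ((p + 1) * (q + 1)) =
      (N.choose p * N.choose q) * ((N - q) * (N - p)) := by
    calc _ = (N.choose (p + 1) * (p + 1)) * (N.choose (q + 1) * (q + 1)) := by ring
      _ = _ := by rw [hp, hq]; ring
  refine Nat.le_of_mul_le_mul_right (c := (p + 1) * (q + 1)) ?_ (by positivity)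
  rw [h2]
  exact Nat.mul_le_mul_left _ h1

lemma pair_gain {N r i j : ℕ} (h : 2 * r + 1 ≤ N + i + j) (a b : ℕ) :
    a * wt N r i + b * wt N r j ≤ a * wt (N + 1) (r + 1) i ∨
    a * wt N r i + b * wt N r j ≤ b * wt (N + 1) (r + 1) j := by
  by_cases hj : j ≤ r
  swap
  · left
    have : wt N r j = 0 := if_neg hj
    rw [this, mul_zero, add_zero]
    exact Nat.mul_le_mul_left _ (wt_le_wt_succ _ _ _)
  by_cases hi : i ≤ r
  swap
  · right
    have : wt N r i = 0 := if_neg hi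
    rw [this, mul_zero, zero_add]
    exact Nat.mul_le_mul_left _ (wt_le_wt_succ _ _ _)
  obtain ⟨p, rfl⟩ := Nat.exists_eq_add_of_le hi
  obtain ⟨q, hq⟩ := Nat.exists_eq_add_of_le hj
  have e1 : wt N (i + p) i = N.choose p := by simp [wt]
  have e2 : wt N (i + p) j = N.choose q := by rw [hq]; simp [wt]
  have e3 : wt (N + 1) (i + p + 1) i = N.choose p + N.choose (p + 1) := by
    rw [← Nat.choose_succ_succ]; simp [wt, add_assoc]
  have e4 : wt (N + 1) (i + p + 1) j = N.choose q + N.choose (q + 1) := by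
    rw [← Nat.choose_succ_succ, hq]; simp [wt, add_assoc]
  rw [e1, e2, e3, e4]
  by_contra! hcon
  have h1 : a * N.choose (p + 1) < b * N.choose q := by linarith [hcon.1]
  have h2 : b * N.choose (q + 1) < a * N.choose p := by linarith [hcon.2]
  have h3 := Nat.mul_lt_mul'' h1 h2
  have h4 : a * b * (N.choose p * N.choose q) ≤ a * b * (N.choose (p + 1) * N.choose (q + 1)) :=
    Nat.mul_le_mul_left _ (choose_mul_choose_le (by omega))
  linarith

lemma middle_gain {n r t l i a b : ℕ} (ht : 1 ≤ t) (htr : t < r)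
    (hn : (t + 1) * (r - t + 1) ≤ n) (hl : l + 1 ≤ n) (htl : t ≤ l) (hi : 2 * i = l + 1 + t)
    (hab : a * (l + 1 - i) ≤ b * l) :
    a * wt (n - (l + 1)) r i ≤ b * wt (n - (l + 1) + 1) (r + 1) i := by
  by_cases hir : i ≤ r
  swap
  · simp [wt, hir]
  obtain ⟨p, rfl⟩ := Nat.exists_eq_add_of_le hir
  obtain ⟨N, rfl⟩ := Nat.exists_eq_add_of_le hl
  obtain ⟨s, rfl⟩ : ∃ s, i = t + 1 + s := ⟨i - (t + 1), by omega⟩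
  obtain rfl : l = t + 2 * s + 1 := by omega
  have e0 : t + 2 * s + 1 + 1 + N - (t + 2 * s + 1 + 1) = N := by omega
  have e1 : wt N (t + 1 + s + p) (t + 1 + s) = N.choose p := by simp [wt]
  have e2 : wt (N + 1) (t + 1 + s + p + 1) (t + 1 + s) = (N + 1).choose (p + 1) := by
    rw [wt, if_pos (by omega)]; congr 1; omega
  rw [e0, e1, e2]
  have e3 : t + 2 * s + 1 + 1 - (t + 1 + s) = s + 1 := by omega
  rw [e3] at hab
  have e4 : t + 1 + s + p - t + 1 = s + p + 2 := by omega
  rw [e4] at hn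
  have hch := Nat.add_one_mul_choose_eq N p
  have hineq : (t + 2 * s + 1) * (p + 1) ≤ (s + 1) * (N + 1) := by
    have : (t + 1) * (s + p + 2) ≤ N + 1 + (t + 2 * s + 1) := by linarith
    obtain ⟨u, rfl⟩ := Nat.exists_eq_add_of_le ht
    nlinarith [Nat.zero_le (s * u * p), Nat.mul_le_mul_left (s + 1) this, Nat.zero_le (s * u * s),
      Nat.zero_le (s * u)]
  refine Nat.le_of_mul_le_mul_right (c := (t + 2 * s + 1) * (p + 1)) ?_ (by positivity)
  calc a * N.choose p * ((t + 2 * s + 1) * (p + 1))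
      ≤ a * N.choose p * ((s + 1) * (N + 1)) := Nat.mul_le_mul_left _ hineq
    _ = (a * (s + 1)) * ((N + 1) * N.choose p) := by ring
    _ ≤ (b * (t + 2 * s + 1)) * ((N + 1) * N.choose p) := Nat.mul_le_mul_right _ hab
    _ = b * (N + 1).choose (p + 1) * ((t + 2 * s + 1) * (p + 1)) := by rw [hch]; ring

/-- Some `m < l` is missed by many members of a uniform family whose members contain `l`. -/
lemma exists_avoiding (l i : ℕ) (hl : 1 ≤ l) (𝒜 : Finset (Finset ℕ))
    (h : ∀ A ∈ 𝒜, A ⊆ range (l + 1) ∧ l ∈ A ∧ #A = i) :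
    ∃ m < l, #𝒜 * (l + 1 - i) ≤ #(𝒜.filter (fun A => m ∉ A)) * l := by
  by_contra! hcon
  have h1 : ∑ m ∈ range l, #(𝒜.filter (fun A => m ∉ A)) * l <
      ∑ m ∈ range l, #𝒜 * (l + 1 - i) :=
    sum_lt_sum_of_nonempty ⟨0, by simp; omega⟩ fun m hm => hcon m (mem_range.1 hm)
  have h2 : ∑ m ∈ range l, #(𝒜.filter (fun A => m ∉ A)) = #𝒜 * (l + 1 - i) := by
    simp_rw [card_filter]
    rw [sum_comm]
    rw [sum_const_nat (m := l + 1 - i)]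
    intro A hA
    obtain ⟨hs, hlA, hc⟩ := h A hA
    rw [← card_filter]
    have : (range l).filter (fun m => m ∉ A) = range (l + 1) \ A := by
      ext x
      simp only [mem_filter, mem_range, mem_sdiff]
      constructor
      · rintro ⟨h1, h2⟩; exact ⟨by omega, h2⟩
      · rintro ⟨h1, h2⟩
        refine ⟨?_, h2⟩
        rcases Nat.lt_succ_iff_lt_or_eq.1 h1 with h | rfl
        · exact h
        · exact absurd hlA h2
    rw [this, card_sdiff_of_subset hs, card_range, hc]
  rw [← sum_mul, h2, sum_const, card_range, smul_eq_mul, mul_comm l] at h1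
  exact lt_irrefl _ h1

lemma sum_card_fiber (𝒟 : Finset (Finset ℕ)) (K : ℕ) (hK : ∀ A ∈ 𝒟, #A < K) (c : ℕ → ℕ) :
    ∑ A ∈ 𝒟, c #A = ∑ i ∈ range K, #(𝒟.filter (fun A => #A = i)) * c i := by
  rw [← sum_fiberwise_of_maps_to (g := fun A => #A) (t := range K)
    (fun A hA => mem_range.2 (hK A hA))]
  refine sum_congr rfl fun i _ => ?_
  rw [sum_const_nat (m := c i)]
  intro A hA
  rw [(mem_filter.1 hA).2]

lemma wt_succ_left (N r i : ℕ) : wt (N + 1) r i = wt N r i + wt N r (i + 1) := by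
  unfold wt
  rcases lt_trichotomy i r with h | rfl | h
  · rw [if_pos h.le, if_pos h.le, if_pos (by omega : i + 1 ≤ r), show r - i = r - (i + 1) + 1 by omega,
      Nat.choose_succ_succ, add_comm]
  · simp
  · rw [if_neg (by omega), if_neg (by omega), if_neg (by omega)]

lemma wt_succ_succ (N r i : ℕ) : wt N (r + 1) (i + 1) = wt N r i := by
  simp [wt]

lemma erase_injOn (l : ℕ) {𝒜 : Finset (Finset ℕ)} (h : ∀ A ∈ 𝒜, l ∈ A) :
    Set.InjOn (fun A : Finset ℕ => A.erase l) 𝒜 := by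
  intro A hA B hB hAB
  rw [← insert_erase (h A hA), ← insert_erase (h B hB)]
  exact congrArg (insert l) hAB

/-- The members of the family that contain `l` and leave the family when `l` is removed. -/
def critical (l : ℕ) (𝒢 : Finset (Finset ℕ)) : Finset (Finset ℕ) :=
  𝒢.filter (fun A => l ∈ A ∧ A.erase l ∉ 𝒢)

lemma sum_wt_eq (l N r : ℕ) (𝒢 : Finset (Finset ℕ)) (hup : ∀ A ∈ 𝒢, insert l A ∈ 𝒢) :
    ∑ A ∈ 𝒢, wt N r #A =
      ∑ A ∈ 𝒢.filter (fun A => l ∉ A), wt (N + 1) r #A + ∑ A ∈ critical l 𝒢, wt N r #A := by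
  have h1 := sum_filter_add_sum_filter_not 𝒢 (fun A => l ∈ A) (fun A => wt N r #A)
  have h2 := sum_filter_add_sum_filter_not (𝒢.filter (fun A => l ∈ A))
    (fun A => A.erase l ∉ 𝒢) (fun A => wt N r #A)
  rw [filter_filter, filter_filter] at h2
  have h3 : ∑ A ∈ 𝒢.filter (fun A => l ∈ A ∧ ¬ A.erase l ∉ 𝒢), wt N r #A =
      ∑ A ∈ 𝒢.filter (fun A => l ∉ A), wt N r (#A + 1) := by
    symm
    refine sum_bij (fun A _ => insert l A) ?_ ?_ ?_ ?_
    · intro A hA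
      obtain ⟨hA, hl⟩ := mem_filter.1 hA
      simp [hup A hA, erase_insert hl, hA]
    · intro A hA B hB hAB
      rw [← erase_insert (mem_filter.1 hA).2, hAB, erase_insert (mem_filter.1 hB).2]
    · intro A hA
      obtain ⟨hA, hl, he⟩ := mem_filter.1 hA
      refine ⟨A.erase l, by simpa using he, insert_erase hl⟩
    · intro A hA
      rw [card_insert_of_notMem (mem_filter.1 hA).2]
  simp_rw [wt_succ_left, sum_add_distrib]
  unfold critical
  omega

lemma card_inter_critical {l t : ℕ} {𝒢 : Finset (Finset ℕ)}
    (hsub : 𝒢 ⊆ (range (l + 1)).powerset) (hint : TIntersecting t 𝒢)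
    (hshift : ∀ A ∈ 𝒢, l ∈ A → ∀ i < l, i ∉ A → insert i (A.erase l) ∈ 𝒢)
    {A B : Finset ℕ} (hA : A ∈ critical l 𝒢) (hB : B ∈ critical l 𝒢)
    (h : #(A.erase l ∩ B.erase l) < t) :
    #A + #B = l + 1 + t ∧ ∀ m < l, m ∈ A ∨ m ∈ B := by
  obtain ⟨hA, hlA, -⟩ := mem_filter.1 hA
  obtain ⟨hB, hlB, -⟩ := mem_filter.1 hB
  have he : A.erase l ∩ B.erase l = (A ∩ B).erase l := by
    ext x; simp only [mem_inter, mem_erase]; tauto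
  have hc : #(A ∩ B) = t := by
    have := hint A hA B hB
    rw [he, card_erase_of_mem (by simp [hlA, hlB])] at h
    omega
  have hm : ∀ m < l, m ∈ A ∨ m ∈ B := by
    by_contra! hcon
    obtain ⟨m, hml, hmA, hmB⟩ := hcon
    have h1 := hint _ (hshift A hA hlA m hml hmA) B hB
    have h2 : insert m (A.erase l) ∩ B = (A ∩ B).erase l := by
      ext x; simp only [mem_inter, mem_erase, mem_insert]
      by_cases hx : x = m
      · subst hx; tauto
      · tauto
    rw [h2, ← he] at h1
    omega
  refine ⟨?_, hm⟩
  have hu : A ∪ B = range (l + 1) := by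
    apply subset_antisymm
    · exact union_subset (mem_powerset.1 (hsub hA)) (mem_powerset.1 (hsub hB))
    · intro x hx
      rw [mem_range, Nat.lt_succ_iff_lt_or_eq] at hx
      rcases hx with hx | rfl
      · exact mem_union.2 (hm x hx)
      · exact mem_union_left _ hlA
  have := card_union_add_card_inter A B
  rw [hu, card_range, hc] at this
  exact this.symm

/-- Removing `l` from suitable critical sets and discarding the others preserves the
intersection property. -/
lemma TIntersecting.union_image_erase {l t m : ℕ} {𝒢 𝒯 : Finset (Finset ℕ)} {S : Finset ℕ}
    (hsub : 𝒢 ⊆ (range (l + 1)).powerset) (hint : TIntersecting t 𝒢)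
    (hshift : ∀ A ∈ 𝒢, l ∈ A → ∀ i < l, i ∉ A → insert i (A.erase l) ∈ 𝒢)
    (hS : ∀ i ∈ S, ∀ j ∈ S, i + j ≠ l + 1 + t) (hm : m < l)
    (h𝒯 : ∀ A ∈ 𝒯, A ∈ critical l 𝒢 ∧ (#A ∈ S ∨ (2 * #A = l + 1 + t ∧ m ∉ A))) :
    TIntersecting t (𝒢.filter (fun A => l ∉ A) ∪ 𝒯.image (fun A => A.erase l)) := by
  have mixed : ∀ A ∈ 𝒢.filter (fun A => l ∉ A), ∀ B ∈ 𝒯, t ≤ #(A ∩ B.erase l) := by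
    intro A hA B hB
    obtain ⟨hA, hlA⟩ := mem_filter.1 hA
    rw [inter_erase, erase_eq_of_notMem (by simp [hlA])]
    exact hint A hA B (mem_filter.1 (h𝒯 B hB).1).1
  intro X hX Y hY
  rw [mem_union, mem_image] at hX hY
  rcases hX with hX | ⟨A, hA, rfl⟩ <;> rcases hY with hY | ⟨B, hB, rfl⟩
  · exact hint X (mem_filter.1 hX).1 Y (mem_filter.1 hY).1
  · exact mixed X hX B hB
  · rw [inter_comm]; exact mixed Y hY A hA
  · by_contra! hlt
    obtain ⟨hAc, hA'⟩ := h𝒯 A hA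
    obtain ⟨hBc, hB'⟩ := h𝒯 B hB
    obtain ⟨hsum, hcov⟩ := card_inter_critical hsub hint hshift hAc hBc hlt
    rcases hA' with hA' | ⟨hA', hmA⟩ <;> rcases hB' with hB' | ⟨hB', hmB⟩
    · exact hS _ hA' _ hB' hsum
    · exact hS _ hA' _ hA' (by omega)
    · exact hS _ hB' _ hB' (by omega)
    · exact (hcov m hm).elim hmA hmB

/-- A `t`-intersecting family on `range (l + 1)` can be replaced by one on `range l` of at least
the same weight. -/
lemma exists_lower {n r t l : ℕ} (ht : 1 ≤ t) (htr : t < r)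
    (hn : (t + 1) * (r - t + 1) ≤ n) (hl : l + 1 ≤ n) (htl : t ≤ l) (𝒢₁ : Finset (Finset ℕ))
    (hsub₁ : 𝒢₁ ⊆ (range (l + 1)).powerset) (hint₁ : TIntersecting t 𝒢₁) :
    ∃ ℋ ⊆ (range l).powerset, TIntersecting t ℋ ∧
      ∑ A ∈ 𝒢₁, wt (n - (l + 1)) r #A ≤ ∑ A ∈ ℋ, wt (n - l) r #A := by
  classical
  obtain ⟨𝒢, hsub, hint, hw, hup, hshift⟩ :=
    exists_compressed l t (wt (n - (l + 1)) r) 𝒢₁ hsub₁ hint₁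
  have hN : n - l = n - (l + 1) + 1 := by omega
  rw [hN]
  have hcrit : ∀ A ∈ critical l 𝒢, A ⊆ range (l + 1) ∧ l ∈ A := fun A hA =>
    ⟨mem_powerset.1 (hsub (mem_filter.1 hA).1), (mem_filter.1 hA).2.1⟩
  have hcard : ∀ A ∈ critical l 𝒢, #A < l + 1 + t + 1 := fun A hA => by
    have := card_le_card (hcrit A hA).1
    rw [card_range] at this
    omega
  have h2r : 2 * r + 1 ≤ n + t := by
    obtain ⟨u, rfl⟩ := Nat.exists_eq_add_of_lt htr
    obtain ⟨v, rfl⟩ := Nat.exists_eq_add_of_le ht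
    rw [show 1 + v + u + 1 - (1 + v) + 1 = u + 2 by omega] at hn
    nlinarith [Nat.zero_le (v * u)]
  obtain ⟨S, hS, hSw⟩ := exists_selection (l + 1 + t)
    (fun i => #((critical l 𝒢).filter (fun A => #A = i))) (wt (n - (l + 1)) r)
    (wt (n - (l + 1) + 1) (r + 1)) (fun i j hij _ => pair_gain (by omega) _ _)
  obtain ⟨m, hml, hm⟩ : ∃ m < l, ∀ i, 2 * i = l + 1 + t →
      #((critical l 𝒢).filter (fun A => #A = i)) * (l + 1 - i) ≤
        #(((critical l 𝒢).filter (fun A => #A = i)).filter (fun A => m ∉ A)) * l := by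
    obtain ⟨m, hml, hm⟩ := exists_avoiding l ((l + 1 + t) / 2) (by omega)
      ((critical l 𝒢).filter (fun A => #A = (l + 1 + t) / 2)) (fun A hA => by
        obtain ⟨hA, hc⟩ := mem_filter.1 hA
        exact ⟨(hcrit A hA).1, (hcrit A hA).2, hc⟩)
    refine ⟨m, hml, fun i hi => ?_⟩
    obtain rfl : i = (l + 1 + t) / 2 := by omega
    exact hm
  set 𝒯 := (critical l 𝒢).filter (fun A => #A ∈ S ∨ (2 * #A = l + 1 + t ∧ m ∉ A)) with h𝒯
  have h𝒯c : ∀ A ∈ 𝒯, A ∈ critical l 𝒢 := fun A hA => (mem_filter.1 hA).1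
  refine ⟨𝒢.filter (fun A => l ∉ A) ∪ 𝒯.image (fun A => A.erase l), ?_,
    hint.union_image_erase hsub hshift hS hml (fun A hA => mem_filter.1 hA), hw.trans ?_⟩
  · have aux : ∀ A ⊆ range (l + 1), l ∉ A → A ∈ (range l).powerset := fun A hA hlA => by
      rw [mem_powerset]
      intro x hx
      have h1 := mem_range.1 (hA hx)
      have h2 : x ≠ l := by rintro rfl; exact hlA hx
      rw [mem_range]; omega
    intro X hX
    rw [mem_union, mem_image] at hX
    rcases hX with hX | ⟨A, hA, rfl⟩
    · exact aux X (mem_powerset.1 (hsub (mem_filter.1 hX).1)) (mem_filter.1 hX).2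
    · exact aux _ ((erase_subset _ _).trans (hcrit A (h𝒯c A hA)).1) (notMem_erase _ _)
  · rw [sum_wt_eq l _ r 𝒢 hup, sum_union, sum_image (erase_injOn l fun A hA =>
      (hcrit A (h𝒯c A hA)).2)]
    · refine Nat.add_le_add_left ?_ _
      have e1 : ∑ A ∈ 𝒯, wt (n - (l + 1) + 1) r #(A.erase l) =
          ∑ A ∈ 𝒯, wt (n - (l + 1) + 1) (r + 1) #A :=
        sum_congr rfl fun A hA => by
          rw [← card_erase_add_one (hcrit A (h𝒯c A hA)).2, wt_succ_succ]
      rw [e1, sum_card_fiber _ (l + 1 + t + 1) hcard,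
        sum_card_fiber 𝒯 (l + 1 + t + 1) (fun A hA => hcard A (h𝒯c A hA))]
      refine hSw.trans (sum_le_sum fun i _ => ?_)
      split_ifs with h1 h2
      · refine Nat.mul_le_mul_right _ (card_le_card fun A hA => ?_)
        obtain ⟨hA, hc⟩ := mem_filter.1 hA
        exact mem_filter.2 ⟨mem_filter.2 ⟨hA, Or.inl (hc ▸ h1)⟩, hc⟩
      · refine (middle_gain ht htr hn hl htl h2 (hm i h2)).trans
          (Nat.mul_le_mul_right _ (card_le_card fun A hA => ?_))
        obtain ⟨hA, hmA⟩ := mem_filter.1 hA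
        obtain ⟨hA, hc⟩ := mem_filter.1 hA
        exact mem_filter.2 ⟨mem_filter.2 ⟨hA, Or.inr ⟨hc ▸ h2, hmA⟩⟩, hc⟩
      · exact Nat.zero_le _
    · rw [disjoint_left]
      intro X hX hX'
      obtain ⟨A, hA, rfl⟩ := mem_image.1 hX'
      exact (mem_filter.1 (h𝒯c A hA)).2.2 (mem_filter.1 hX).1

theorem sum_wt_le {n r t : ℕ} (ht : 1 ≤ t) (htr : t < r) (hn : (t + 1) * (r - t + 1) ≤ n)
    (L : ℕ) (hL : L ≤ n) (𝒢 : Finset (Finset ℕ)) (hsub : 𝒢 ⊆ (range L).powerset)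
    (hint : TIntersecting t 𝒢) :
    ∑ A ∈ 𝒢, wt (n - L) r #A ≤ (n - t).choose (r - t) := by
  induction L generalizing 𝒢 with
  | zero =>
    have : 𝒢 = ∅ := eq_empty_of_forall_notMem fun A hA => by
      have h1 := hint A hA A hA
      have h2 := card_le_card (mem_powerset.1 (hsub hA))
      rw [inter_self] at h1
      rw [card_range] at h2
      omega
    simp [this]
  | succ l ih =>
    by_cases htl : t ≤ l
    · obtain ⟨ℋ, h1, h2, h3⟩ := exists_lower ht htr hn hL htl 𝒢 hsub hint
      exact h3.trans (ih (by omega) ℋ h1 h2)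
    · have h𝒢 : ∀ A ∈ 𝒢, l + 1 = t ∧ A = range t := fun A hA => by
        have h1 := hint A hA A hA
        have h2 := mem_powerset.1 (hsub hA)
        have h3 := card_le_card h2
        rw [inter_self] at h1
        rw [card_range] at h3
        have h4 : l + 1 = t := by omega
        exact ⟨h4, h4 ▸ eq_of_subset_of_card_le h2 (by rw [card_range]; omega)⟩
      have h5 : 𝒢 ⊆ {range t} := fun A hA => mem_singleton.2 (h𝒢 A hA).2
      rcases 𝒢.eq_empty_or_nonempty with rfl | ⟨A, hA⟩
      · simp
      · refine (sum_le_sum_of_subset h5).trans ?_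
        rw [sum_singleton, card_range, (h𝒢 A hA).1, wt, if_pos htr.le]

end IntersectingFamily


/-- For `1 ≤ k < r` and `n ≥ (k+1)(r-k+1)`, every `r`-uniform
`k`-intersecting hypergraph on `n` vertices has at most `C(n-k, r-k)` edges. -/
theorem stmt_6 (n r k : ℕ) (hk : 1 ≤ k) (hkr : k < r) (hn : (k + 1) * (r - k + 1) ≤ n)
    (E : Finset (Finset (Fin n)))
    (hunif : ∀ e ∈ E, e.card = r)
    (hint : ∀ e₁ ∈ E, ∀ e₂ ∈ E, k ≤ (e₁ ∩ e₂).card) :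
    E.card ≤ (n - k).choose (r - k) := by
  classical
  have hinj : Set.InjOn (fun e : Finset (Fin n) => e.map Fin.valEmbedding) E :=
    (Finset.map_injective _).injOn
  have h := IntersectingFamily.sum_wt_le hk hkr hn n le_rfl
    (E.image fun e => e.map Fin.valEmbedding) ?_ ?_
  · rw [Finset.sum_image hinj, Finset.sum_const_nat (m := 1), mul_one] at h
    · exact h
    · intro e he
      simp [IntersectingFamily.wt, hunif e he]
  · intro A hA
    obtain ⟨e, -, rfl⟩ := Finset.mem_image.1 hA
    rw [Finset.mem_powerset]
    intro x hx
    obtain ⟨y, -, rfl⟩ := Finset.mem_map.1 hx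
    simp
  · intro A hA B hB
    obtain ⟨e, he, rfl⟩ := Finset.mem_image.1 hA
    obtain ⟨f, hf, rfl⟩ := Finset.mem_image.1 hB
    rw [← Finset.map_inter, Finset.card_map]
    exact hint e he f hf
end
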